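/- arXiv:2605.13562 — 2 statements merged into one kernel-verified Lean document; each statement's English description precedes it below -/
import Mathlib

section
/- Suppose s₀ > 0 satisfies the free boundary condition tanh(φ(s₀)) = B(s₀)·K/(a·sinh(2s₀)), and let r := arcosh(A(s₀)·cosh(φ(s₀))). Then the field f_*(s) := d/ds (A(s)·cosh(φ(s))) satisfies f_*(s₀) = sinh(r) and the Robin boundary condition f_*'(s₀) = coth(r)·f_*(s₀). -/
namespace MoriCatenoid

/-- Profile function `B(s) = √(a·cosh(2s) − 1/2)` of the Mori family. -/
noncomputable def B (a s : ℝ) : ℝ := Real.sqrt (a * Real.cosh (2 * s) - 1 / 2)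

/-- Profile function `A(s) = √(a·cosh(2s) + 1/2)` of the Mori family. -/
noncomputable def A (a s : ℝ) : ℝ := Real.sqrt (a * Real.cosh (2 * s) + 1 / 2)

/-- The constant `K = √(a² − 1/4)`. -/
noncomputable def K (a : ℝ) : ℝ := Real.sqrt (a ^ 2 - 1 / 4)

/-- The angle function `φ(s) = K·∫₀ˢ dt/(A(t)²·B(t))`. -/
noncomputable def φ (a s : ℝ) : ℝ := K a * ∫ t in (0:ℝ)..s, 1 / ((A a t) ^ 2 * B a t)

/-- The mode-one Jacobi field `f_*(s) = d/ds (A(s)·cosh(φ(s)))`. -/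
noncomputable def fstar (a s : ℝ) : ℝ := deriv (fun t => A a t * Real.cosh (φ a t)) s

/-- Squared norm of the second fundamental form, `|II|²(s) = 2·(B''(s)/B(s) − 1)`. -/
noncomputable def IIsq (a s : ℝ) : ℝ := 2 * (deriv (deriv (B a)) s / B a s - 1)

/-- The mode-`k` potential `W_k(s) = |II|²(s) − 2 − k²/B(s)²`. -/
noncomputable def W (a : ℝ) (k : ℤ) (s : ℝ) : ℝ := IIsq a s - 2 - (k : ℝ) ^ 2 / (B a s) ^ 2

/-- Inverse hyperbolic cosine: `arcosh x = log (x + √(x² − 1))`. -/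
noncomputable def arcosh (x : ℝ) : ℝ := Real.log (x + Real.sqrt (x ^ 2 - 1))

/-- The axial boost field `u_*(s) = −a·sinh(2s)/B(s)`. -/
noncomputable def ustar (a s : ℝ) : ℝ := -a * Real.sinh (2 * s) / B a s

/-- The radial quadratic form of mode `k`:
`S_k(u) = ∫_{−s₀}^{s₀} (B·u'² − B·W_k·u²) − coth(r)·B(s₀)·(u(s₀)² + u(−s₀)²)`,
where `u'` is the derivative of `u` within `[−s₀, s₀]`. -/
noncomputable def Sk (a s₀ r : ℝ) (k : ℤ) (u : ℝ → ℝ) : ℝ :=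
  (∫ s in (-s₀)..s₀,
      (B a s * (derivWithin u (Set.Icc (-s₀) s₀) s) ^ 2 - B a s * W a k s * u s ^ 2))
    - Real.cosh r / Real.sinh r * B a s₀ * (u s₀ ^ 2 + u (-s₀) ^ 2)

theorem auxC (a : ℝ) (ha : 1 / 2 < a) (s : ℝ) : 1 / 2 < a * Real.cosh (2 * s) := by
  nlinarith [Real.one_le_cosh (2 * s)]

theorem auxB_pos (a : ℝ) (ha : 1 / 2 < a) (s : ℝ) : 0 < B a s :=
  Real.sqrt_pos.2 (by linarith [auxC a ha s])

theorem auxA_pos (a : ℝ) (ha : 1 / 2 < a) (s : ℝ) : 0 < A a s :=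
  Real.sqrt_pos.2 (by linarith [auxC a ha s])

theorem auxB_sq (a : ℝ) (ha : 1 / 2 < a) (s : ℝ) :
    B a s ^ 2 = a * Real.cosh (2 * s) - 1 / 2 :=
  Real.sq_sqrt (by linarith [auxC a ha s])

theorem auxA_sq (a : ℝ) (ha : 1 / 2 < a) (s : ℝ) :
    A a s ^ 2 = a * Real.cosh (2 * s) + 1 / 2 :=
  Real.sq_sqrt (by linarith [auxC a ha s])

theorem auxS (a s : ℝ) :
    HasDerivAt (fun s => a * Real.sinh (2 * s)) (2 * (a * Real.cosh (2 * s))) s := by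
  have h := (((hasDerivAt_id s).const_mul 2).sinh).const_mul a
  exact h.congr_deriv (by simp only [id]; ring)

theorem auxCd (a s : ℝ) :
    HasDerivAt (fun s => a * Real.cosh (2 * s)) (2 * (a * Real.sinh (2 * s))) s := by
  have h := (((hasDerivAt_id s).const_mul 2).cosh).const_mul a
  exact h.congr_deriv (by simp only [id]; ring)

theorem auxA_deriv (a : ℝ) (ha : 1 / 2 < a) (s : ℝ) :
    HasDerivAt (A a) (a * Real.sinh (2 * s) / A a s) s := by
  have hp := auxC a ha s
  have h := ((auxCd a s).add_const (1 / 2)).sqrt (by linarith)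
  exact h.congr_deriv (mul_div_mul_left _ _ two_ne_zero)

theorem auxB_deriv (a : ℝ) (ha : 1 / 2 < a) (s : ℝ) :
    HasDerivAt (B a) (a * Real.sinh (2 * s) / B a s) s := by
  have hp := auxC a ha s
  have h := ((auxCd a s).sub_const (1 / 2)).sqrt (by linarith)
  exact h.congr_deriv (mul_div_mul_left _ _ two_ne_zero)

theorem auxφ_deriv (a : ℝ) (ha : 1 / 2 < a) (s : ℝ) :
    HasDerivAt (φ a) (K a * (1 / (A a s ^ 2 * B a s))) s := by
  have hc : Continuous (fun t => 1 / ((A a t) ^ 2 * B a t)) := by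
    have h1 : Continuous (A a) :=
      continuous_iff_continuousAt.2 fun x => (auxA_deriv a ha x).continuousAt
    have h2 : Continuous (B a) :=
      continuous_iff_continuousAt.2 fun x => (auxB_deriv a ha x).continuousAt
    refine Continuous.div continuous_const ((h1.pow 2).mul h2) fun t => ?_
    have := auxA_pos a ha t
    have := auxB_pos a ha t
    positivity
  exact (hc.integral_hasStrictDerivAt 0 s).hasDerivAt.const_mul (K a)

theorem aux_fstar (a : ℝ) (ha : 1 / 2 < a) (s : ℝ) :
    fstar a s = a * Real.sinh (2 * s) * Real.cosh (φ a s) / A a s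
      + K a * Real.sinh (φ a s) / (A a s * B a s) := by
  have h := ((auxA_deriv a ha s).mul (auxφ_deriv a ha s).cosh).deriv
  have hA := auxA_pos a ha s
  have hB := auxB_pos a ha s
  refine Eq.trans h ?_
  field_simp

/-- Robin boundary condition for `f_*`: under the free boundary condition,
`f_*(s₀) = sinh r` and `f_*'(s₀) = coth(r)·f_*(s₀)`. -/
theorem fstar_robin_condition (a : ℝ) (ha : 1 / 2 < a) (s₀ : ℝ) (hs₀ : 0 < s₀)
    (hFBC : Real.tanh (φ a s₀) = B a s₀ * K a / (a * Real.sinh (2 * s₀)))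
    (r : ℝ) (hr : r = arcosh (A a s₀ * Real.cosh (φ a s₀))) :
    fstar a s₀ = Real.sinh r ∧
    deriv (fstar a) s₀ = Real.cosh r / Real.sinh r * fstar a s₀ := by
  have hA := auxA_pos a ha s₀
  have hB := auxB_pos a ha s₀
  have hA2 := auxA_sq a ha s₀
  have hB2 := auxB_sq a ha s₀
  have hK2 : K a ^ 2 = a ^ 2 - 1 / 4 := Real.sq_sqrt (by nlinarith)
  have hS : 0 < a * Real.sinh (2 * s₀) :=
    mul_pos (by linarith) (Real.sinh_pos_iff.2 (by linarith))
  have hSC : (a * Real.sinh (2 * s₀)) ^ 2 = (a * Real.cosh (2 * s₀)) ^ 2 - a ^ 2 := by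
    rw [mul_pow, mul_pow, Real.cosh_sq]; ring
  have hc := Real.cosh_pos (φ a s₀)
  have hc1 := Real.one_le_cosh (φ a s₀)
  have hch := Real.cosh_sq (φ a s₀)
  have hC := auxC a ha s₀
  have hd := (((auxS a s₀).mul (auxφ_deriv a ha s₀).cosh).div (auxA_deriv a ha s₀) hA.ne').add
      (((auxφ_deriv a ha s₀).sinh.const_mul (K a)).div
        ((auxA_deriv a ha s₀).mul (auxB_deriv a ha s₀)) (mul_pos hA hB).ne')
  replace hd := hd.congr_of_eventuallyEq (f₁ := fstar a) (Filter.Eventually.of_forall fun s => aux_fstar a ha s)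
  have hf := aux_fstar a ha s₀
  have hA1 : 1 ≤ A a s₀ := by nlinarith
  have hx : 1 ≤ A a s₀ * Real.cosh (φ a s₀) := one_le_mul_of_one_le_of_one_le hA1 hc1
  have hcr : Real.cosh r = A a s₀ * Real.cosh (φ a s₀) := by
    rw [hr]; exact Real.cosh_arcosh hx
  have hsr : Real.sinh r = √((A a s₀ * Real.cosh (φ a s₀)) ^ 2 - 1) := by
    rw [hr]; exact Real.sinh_arcosh hx
  have hd' := hd.deriv
  simp only [Pi.mul_apply] at hd'
  clear hd
  rw [Real.tanh_eq_sinh_div_cosh] at hFBC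
  have hh : Real.sinh (φ a s₀) = B a s₀ * K a * Real.cosh (φ a s₀) / (a * Real.sinh (2 * s₀)) := by
    rw [div_eq_iff hc.ne'] at hFBC
    rw [hFBC]; ring
  clear hFBC hr
  rw [hh] at hf hd' hch
  clear hh
  generalize a * Real.sinh (2 * s₀) = S at *
  generalize a * Real.cosh (2 * s₀) = C at *
  generalize Real.cosh (φ a s₀) = c at *
  generalize A a s₀ = x at *
  generalize B a s₀ = y at *
  generalize K a = k at *
  have e1 : C = y ^ 2 + 1 / 2 := by linarith
  have e2 : x ^ 2 = y ^ 2 + 1 := by linarith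
  have e3 : k ^ 2 = x ^ 2 * y ^ 2 - S ^ 2 := by
    rw [e2]; subst e1; linarith
  have hf1 : fstar a s₀ = c * x * y ^ 2 / S := by
    rw [hf]; field_simp
    linear_combination e3
  have hfpos : 0 < fstar a s₀ := by rw [hf1]; positivity
  have hsq : (x * c) ^ 2 - 1 = fstar a s₀ ^ 2 := by
    rw [hf1]
    field_simp at hch ⊢
    have e4 : k ^ 2 = (y ^ 2 + 1) * y ^ 2 - S ^ 2 := by rw [e3, e2]
    rw [e4] at hch
    rw [e2]
    linear_combination hch
  have hsr' : Real.sinh r = fstar a s₀ := by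
    rw [hsr, hsq, Real.sqrt_sq hfpos.le]
  refine ⟨hsr'.symm, ?_⟩
  rw [hsr', div_mul_cancel₀ _ hfpos.ne', hcr, hd']
  field_simp
  have e5 : x ^ 4 = (y ^ 2 + 1) ^ 2 := by rw [← e2]; ring
  rw [e5, e3, e2, e1]
  ring

end MoriCatenoid
end

section
/- Picone identity with base f_*: suppose s₀ > 0 satisfies the free boundary condition tanh(φ(s₀)) = B(s₀)·K/(a·sinh(2s₀)), and let r := arcosh(A(s₀)·cosh(φ(s₀))). Then for every integer k and every continuously differentiable h : [−s₀, s₀] → ℝ, setting u := f_*·h one has S_k(u) = (k² − 1)·∫_{−s₀}^{s₀} f_*(s)²·h(s)²/B(s) ds + ∫_{−s₀}^{s₀} B(s)·f_*(s)²·h'(s)² ds. -/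
namespace MoriCatenoid

section helpers
variable {a : ℝ}

lemma c_ge (ha : 1 / 2 < a) (s : ℝ) : 1 / 2 < a * Real.cosh (2 * s) := by
  nlinarith [Real.one_le_cosh (2 * s)]

lemma B_pos (ha : 1 / 2 < a) (s : ℝ) : 0 < B a s :=
  Real.sqrt_pos.mpr (by linarith [c_ge ha s])

lemma A_pos (ha : 1 / 2 < a) (s : ℝ) : 0 < A a s :=
  Real.sqrt_pos.mpr (by linarith [c_ge ha s])

lemma B_sq (ha : 1 / 2 < a) (s : ℝ) : B a s ^ 2 = a * Real.cosh (2 * s) - 1 / 2 :=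
  Real.sq_sqrt (by linarith [c_ge ha s])

lemma A_sq (ha : 1 / 2 < a) (s : ℝ) : A a s ^ 2 = a * Real.cosh (2 * s) + 1 / 2 :=
  Real.sq_sqrt (by linarith [c_ge ha s])

lemma K_sq (ha : 1 / 2 < a) : K a ^ 2 = a ^ 2 - 1 / 4 :=
  Real.sq_sqrt (by nlinarith)

/-- Auxiliary: `σ = a sinh 2s`. -/
noncomputable def sg (a s : ℝ) : ℝ := a * Real.sinh (2 * s)

lemma sg_sq (ha : 1 / 2 < a) (s : ℝ) : sg a s ^ 2 + K a ^ 2 = A a s ^ 2 * B a s ^ 2 := by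
  rw [K_sq ha, A_sq ha, B_sq ha, sg]
  have := Real.cosh_sq (2 * s)
  linear_combination (-a ^ 2) * this

lemma hd_c (s : ℝ) : HasDerivAt (fun s => a * Real.cosh (2 * s)) (2 * sg a s) s := by
  have h := (((hasDerivAt_id s).const_mul 2).cosh).const_mul a
  refine h.congr_deriv ?_
  simp [sg]; ring

lemma hd_sg (ha : 1 / 2 < a) (s : ℝ) : HasDerivAt (sg a) (2 * B a s ^ 2 + 1) s := by
  have h := (((hasDerivAt_id s).const_mul 2).sinh).const_mul a
  refine h.congr_deriv ?_
  rw [B_sq ha]; simp; ring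

lemma hd_B (ha : 1 / 2 < a) (s : ℝ) : HasDerivAt (B a) (sg a s / B a s) s := by
  have h := ((hd_c (a := a) s).sub_const (1 / 2)).sqrt (by linarith [c_ge ha s])
  refine h.congr_deriv ?_
  change 2 * sg a s / (2 * B a s) = _
  have := B_pos ha s
  field_simp

lemma hd_A (ha : 1 / 2 < a) (s : ℝ) : HasDerivAt (A a) (sg a s / A a s) s := by
  have h := ((hd_c (a := a) s).add_const (1 / 2)).sqrt (by linarith [c_ge ha s])
  refine h.congr_deriv ?_
  change 2 * sg a s / (2 * A a s) = _
  have := A_pos ha s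
  field_simp

lemma cont_B (ha : 1 / 2 < a) : Continuous (B a) :=
  continuous_iff_continuousAt.mpr fun s => (hd_B ha s).continuousAt

lemma cont_A (ha : 1 / 2 < a) : Continuous (A a) :=
  continuous_iff_continuousAt.mpr fun s => (hd_A ha s).continuousAt

lemma hd_phi (ha : 1 / 2 < a) (s : ℝ) :
    HasDerivAt (φ a) (K a / (A a s ^ 2 * B a s)) s := by
  have hc : Continuous fun t => 1 / ((A a t) ^ 2 * B a t) := by
    refine continuous_const.div (((cont_A ha).pow 2).mul (cont_B ha)) fun t => ?_
    have := A_pos ha t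
    have := B_pos ha t
    positivity
  have h := (intervalIntegral.integral_hasDerivAt_right (hc.intervalIntegrable 0 s)
    hc.aestronglyMeasurable.stronglyMeasurableAtFilter hc.continuousAt).const_mul (K a)
  refine h.congr_deriv ?_
  ring

lemma hd_F (ha : 1 / 2 < a) (s : ℝ) :
    HasDerivAt (fun t => A a t * Real.cosh (φ a t))
      ((sg a s * Real.cosh (φ a s) + K a / B a s * Real.sinh (φ a s)) / A a s) s := by
  have h := (hd_A ha s).mul (hd_phi ha s).cosh
  refine h.congr_deriv ?_
  have := A_pos ha s
  have := B_pos ha s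
  field_simp

lemma fstar_eq (ha : 1 / 2 < a) (s : ℝ) : fstar a s =
    (sg a s * Real.cosh (φ a s) + K a / B a s * Real.sinh (φ a s)) / A a s :=
  (hd_F ha s).deriv

/-- Auxiliary: derivative of `fstar`. -/
noncomputable def gg (a s : ℝ) : ℝ :=
  2 * (A a s * Real.cosh (φ a s)) - sg a s / B a s ^ 2 * fstar a s

lemma hd_f (ha : 1 / 2 < a) (s : ℝ) : HasDerivAt (fstar a) (gg a s) s := by
  have h := ((((hd_sg ha s).mul (hd_phi ha s).cosh).add
    (((hasDerivAt_const s (K a)).div (hd_B ha s) (B_pos ha s).ne').mul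
      (hd_phi ha s).sinh)).div (hd_A ha s) (A_pos ha s).ne')
  have h' := h.congr_of_eventuallyEq (f₁ := fstar a)
    (Filter.Eventually.of_forall fun t => by simp [fstar_eq ha t])
  refine h'.congr_deriv ?_
  have hA := A_pos ha s
  have hB := B_pos ha s
  have h1 := sg_sq ha s
  have h2 : A a s ^ 2 = B a s ^ 2 + 1 := by rw [A_sq ha, B_sq ha]; ring
  rw [gg, fstar_eq ha]
  simp only [Pi.mul_apply, Pi.add_apply, Pi.div_apply]
  generalize Real.cosh (φ a s) = C
  generalize Real.sinh (φ a s) = S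
  have hK : K a ^ 2 = A a s ^ 2 * B a s ^ 2 - sg a s ^ 2 := by linarith
  generalize A a s = x at *
  generalize B a s = y at *
  generalize sg a s = σ at *
  generalize K a = κ at *
  field_simp
  linear_combination y * C * h1 + y * C * (σ ^ 2 - 2 * x ^ 2 * y ^ 2) * h2

lemma hd_BG (ha : 1 / 2 < a) (s : ℝ) :
    HasDerivAt (fun t => B a t * gg a t) (- B a s * W a 1 s * fstar a s) s := by
  have h := (((hd_B ha s).mul (hd_F ha s)).const_mul 2).sub
    (((hd_sg ha s).div (hd_B ha s) (B_pos ha s).ne').mul (hd_f ha s))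
  have h' := h.congr_of_eventuallyEq (f₁ := fun t => B a t * gg a t)
    (Filter.Eventually.of_forall fun t => by
      have := B_pos ha t
      simp [gg]; field_simp)
  refine h'.congr_deriv ?_
  have hB := B_pos ha s
  have hb : deriv (B a) = fun s => sg a s / B a s := funext fun s => (hd_B ha s).deriv
  have hbb := ((hd_sg ha s).div (hd_B ha s) hB.ne').deriv
  change deriv (fun s => sg a s / B a s) s = _ at hbb
  rw [W, IIsq, hb, hbb]
  rw [← fstar_eq ha, gg]
  simp only [Pi.div_apply]
  push_cast
  field_simp
  ring

lemma cont_f (ha : 1 / 2 < a) : Continuous (fstar a) :=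
  continuous_iff_continuousAt.mpr fun s => (hd_f ha s).continuousAt

lemma cont_BG (ha : 1 / 2 < a) : Continuous (fun t => B a t * gg a t) :=
  continuous_iff_continuousAt.mpr fun s => (hd_BG ha s).continuousAt

lemma cont_sg (ha : 1 / 2 < a) : Continuous (sg a) :=
  continuous_iff_continuousAt.mpr fun s => (hd_sg ha s).continuousAt

lemma cont_phi (ha : 1 / 2 < a) : Continuous (φ a) :=
  continuous_iff_continuousAt.mpr fun s => (hd_phi ha s).continuousAt

lemma cont_G (ha : 1 / 2 < a) : Continuous (gg a) :=
  (continuous_const.mul ((cont_A ha).mul (Real.continuous_cosh.comp (cont_phi ha)))).sub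
    (((cont_sg ha).div ((cont_B ha).pow 2) fun t => (pow_pos (B_pos ha t) 2).ne').mul (cont_f ha))

lemma W_eq (ha : 1 / 2 < a) (k : ℤ) (s : ℝ) : W a k s = W a 1 s - ((k:ℝ) ^ 2 - 1) / B a s ^ 2 := by
  simp only [W]; push_cast; ring

lemma cont_W (ha : 1 / 2 < a) (k : ℤ) : Continuous (W a k) := by
  have hb : deriv (B a) = fun s => sg a s / B a s := funext fun s => (hd_B ha s).deriv
  have hbb : deriv (deriv (B a)) =
      fun s => ((2 * B a s ^ 2 + 1) * B a s - sg a s * (sg a s / B a s)) / B a s ^ 2 := by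
    funext s
    rw [hb]
    exact ((hd_sg ha s).div (hd_B ha s) (B_pos ha s).ne').deriv
  have e : W a k = fun s => 2 * (((2 * B a s ^ 2 + 1) * B a s - sg a s * (sg a s / B a s))
      / B a s ^ 2 / B a s - 1) - 2 - (k : ℝ) ^ 2 / (B a s) ^ 2 := by
    funext s
    rw [W, IIsq, hbb]
  rw [e]
  have h0 : ∀ s, B a s ≠ 0 := fun s => (B_pos ha s).ne'
  have h1 : ∀ s, B a s ^ 2 ≠ 0 := fun s => pow_ne_zero 2 (h0 s)
  have := cont_B ha
  have := cont_sg ha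
  fun_prop (disch := assumption)

lemma B_neg (s : ℝ) : B a (-s) = B a s := by simp [B]
lemma A_neg (s : ℝ) : A a (-s) = A a s := by simp [A]
lemma sg_neg (s : ℝ) : sg a (-s) = - sg a s := by simp [sg]
lemma phi_neg (s : ℝ) : φ a (-s) = - φ a s := by
  have := intervalIntegral.integral_comp_neg (a := 0) (b := s)
    (fun t => 1 / ((A a t) ^ 2 * B a t))
  simp only [A_neg, B_neg, neg_zero] at this
  rw [φ, φ, this, intervalIntegral.integral_symm]; ring

lemma f_neg (ha : 1 / 2 < a) (s : ℝ) : fstar a (-s) = - fstar a s := by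
  rw [fstar_eq ha, fstar_eq ha, B_neg, A_neg, sg_neg, phi_neg, Real.cosh_neg, Real.sinh_neg]; ring

lemma gg_neg (ha : 1 / 2 < a) (s : ℝ) : gg a (-s) = gg a s := by
  rw [gg, gg, f_neg ha, B_neg, A_neg, sg_neg, phi_neg, Real.cosh_neg]; ring

lemma cosh_arcosh' {x : ℝ} (hx : 1 ≤ x) : Real.cosh (arcosh x) = x ∧
    Real.sinh (arcosh x) = Real.sqrt (x ^ 2 - 1) := by
  have hq := Real.sq_sqrt (show 0 ≤ x ^ 2 - 1 by nlinarith)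
  have hn := Real.sqrt_nonneg (x ^ 2 - 1)
  have hp : 0 < x + Real.sqrt (x ^ 2 - 1) := by linarith
  rw [Real.cosh_eq, Real.sinh_eq, arcosh, Real.exp_neg, Real.exp_log hp]
  have hi : (x + Real.sqrt (x ^ 2 - 1))⁻¹ = x - Real.sqrt (x ^ 2 - 1) := by
    exact inv_eq_of_mul_eq_one_right (by nlinarith)
  rw [hi]
  constructor <;> ring

lemma bdry (ha : 1 / 2 < a) (s₀ : ℝ) (hs₀ : 0 < s₀)
    (hFBC : Real.tanh (φ a s₀) = B a s₀ * K a / (a * Real.sinh (2 * s₀)))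
    (r : ℝ) (hr : r = arcosh (A a s₀ * Real.cosh (φ a s₀))) :
    Real.cosh r / Real.sinh r * fstar a s₀ = gg a s₀ := by
  have hA := A_pos ha s₀
  have hB := B_pos ha s₀
  have hA1 : 1 ≤ A a s₀ := by
    nlinarith [A_sq ha s₀, c_ge ha s₀]
  have hC := Real.cosh_pos (φ a s₀)
  have hF : 1 ≤ A a s₀ * Real.cosh (φ a s₀) := by
    nlinarith [Real.one_le_cosh (φ a s₀)]
  obtain ⟨hc, hs⟩ := cosh_arcosh' hF
  have hσ : 0 < sg a s₀ := mul_pos (by linarith) (Real.sinh_pos_iff.mpr (by linarith))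
  change _ = _ / sg a s₀ at hFBC
  rw [Real.tanh_eq_sinh_div_cosh, div_eq_div_iff hC.ne' hσ.ne'] at hFBC
  have h1 := sg_sq ha s₀
  have h2 : A a s₀ ^ 2 = B a s₀ ^ 2 + 1 := by rw [A_sq ha, B_sq ha]; ring
  have h3 := Real.cosh_sq (φ a s₀)
  have hS : Real.sinh (φ a s₀) = B a s₀ * K a * Real.cosh (φ a s₀) / sg a s₀ := by
    field_simp; linarith
  have hf : fstar a s₀ = A a s₀ * Real.cosh (φ a s₀) * B a s₀ ^ 2 / sg a s₀ := by
    rw [fstar_eq ha, hS]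
    field_simp
    linear_combination h1
  have hg : gg a s₀ = A a s₀ * Real.cosh (φ a s₀) := by
    rw [gg, hf]; field_simp; ring
  have hfp : 0 < fstar a s₀ := by rw [hf]; positivity
  have hsq : (A a s₀ * Real.cosh (φ a s₀)) ^ 2 - 1 = fstar a s₀ ^ 2 := by
    rw [hf]
    rw [hS] at h3
    field_simp at h3 ⊢
    generalize Real.cosh (φ a s₀) = C at *
    generalize A a s₀ = x at *
    generalize B a s₀ = y at *
    generalize sg a s₀ = σ at *
    generalize K a = κ at *
    linear_combination h3 + C ^ 2 * σ ^ 2 * h2 + C ^ 2 * y ^ 2 * h1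
  rw [hr, hc, hs, hsq, Real.sqrt_sq hfp.le, hg]
  field_simp

end helpers

/-- Picone identity with base `f_*`: under the free boundary condition, for every
integer `k` and every `h` of class `C¹` on `[−s₀, s₀]`, setting `u = f_*·h`,
`S_k(u) = (k² − 1)·∫ f_*²·h²/B + ∫ B·f_*²·h'²`. -/
theorem picone_identity_fstar (a : ℝ) (ha : 1 / 2 < a) (s₀ : ℝ) (hs₀ : 0 < s₀)
    (hFBC : Real.tanh (φ a s₀) = B a s₀ * K a / (a * Real.sinh (2 * s₀)))
    (r : ℝ) (hr : r = arcosh (A a s₀ * Real.cosh (φ a s₀)))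
    (k : ℤ) (h : ℝ → ℝ) (hh : ContDiffOn ℝ 1 h (Set.Icc (-s₀) s₀)) :
    Sk a s₀ r k (fun s => fstar a s * h s)
      = ((k : ℝ) ^ 2 - 1) * (∫ s in (-s₀)..s₀, fstar a s ^ 2 * h s ^ 2 / B a s)
        + ∫ s in (-s₀)..s₀,
            B a s * fstar a s ^ 2 * (derivWithin h (Set.Icc (-s₀) s₀) s) ^ 2 := by
  have hle : -s₀ ≤ s₀ := by linarith
  have hlt : -s₀ < s₀ := by linarith
  have hU : UniqueDiffOn ℝ (Set.Icc (-s₀) s₀) := uniqueDiffOn_Icc hlt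
  have hhd : DifferentiableOn ℝ h (Set.Icc (-s₀) s₀) := hh.differentiableOn (by norm_num)
  have hhc : ContinuousOn h (Set.Icc (-s₀) s₀) := hh.continuousOn
  set h' := derivWithin h (Set.Icc (-s₀) s₀) with hh'
  have hh'c : ContinuousOn h' (Set.Icc (-s₀) s₀) := hh.continuousOn_derivWithin hU (by norm_num)
  have hder : ∀ s ∈ Set.Icc (-s₀) s₀,
      derivWithin (fun s => fstar a s * h s) (Set.Icc (-s₀) s₀) s
        = gg a s * h s + fstar a s * h' s := fun s hs =>
    ((hd_f ha s).hasDerivWithinAt.mul (hhd s hs).hasDerivWithinAt).derivWithin (hU s hs)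
  have cB := (cont_B ha).continuousOn (s := Set.Icc (-s₀) s₀)
  have cf := (cont_f ha).continuousOn (s := Set.Icc (-s₀) s₀)
  have cG := (cont_G ha).continuousOn (s := Set.Icc (-s₀) s₀)
  have cW := (cont_W ha 1).continuousOn (s := Set.Icc (-s₀) s₀)
  have hB0 : ∀ s ∈ Set.Icc (-s₀) s₀, B a s ≠ 0 := fun s _ => (B_pos ha s).ne'
  have hP : ∫ s in (-s₀)..s₀, ((- B a s * W a 1 s * fstar a s) * (fstar a s * h s ^ 2)
      + B a s * gg a s * (gg a s * h s ^ 2 + fstar a s * (2 * h s * h' s)))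
      = B a s₀ * gg a s₀ * (fstar a s₀ * h s₀ ^ 2)
        - B a (-s₀) * gg a (-s₀) * (fstar a (-s₀) * h (-s₀) ^ 2) := by
    refine intervalIntegral.integral_eq_sub_of_hasDerivAt_of_le hle
      (f := fun s => B a s * gg a s * (fstar a s * h s ^ 2)) (by fun_prop) ?_ ?_
    · intro s hs
      have h1 : HasDerivAt h (h' s) s :=
        (hhd s (Set.Ioo_subset_Icc_self hs)).hasDerivWithinAt.hasDerivAt
          (Icc_mem_nhds hs.1 hs.2)
      refine ((hd_BG ha s).mul ((hd_f ha s).mul (h1.pow 2))).congr_deriv ?_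
      simp
    · exact ContinuousOn.intervalIntegrable_of_Icc hle (by fun_prop)
  have i1 : IntervalIntegrable (fun s => (- B a s * W a 1 s * fstar a s) * (fstar a s * h s ^ 2)
      + B a s * gg a s * (gg a s * h s ^ 2 + fstar a s * (2 * h s * h' s)))
      MeasureTheory.volume (-s₀) s₀ :=
    ContinuousOn.intervalIntegrable_of_Icc hle (by fun_prop)
  have i2 : IntervalIntegrable (fun s => fstar a s ^ 2 * h s ^ 2 / B a s)
      MeasureTheory.volume (-s₀) s₀ :=
    ContinuousOn.intervalIntegrable_of_Icc hle (by fun_prop (disch := assumption))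
  have i3 : IntervalIntegrable (fun s => B a s * fstar a s ^ 2 * h' s ^ 2)
      MeasureTheory.volume (-s₀) s₀ :=
    ContinuousOn.intervalIntegrable_of_Icc hle (by fun_prop)
  have hI : ∫ s in (-s₀)..s₀, (B a s * (derivWithin (fun s => fstar a s * h s)
        (Set.Icc (-s₀) s₀) s) ^ 2 - B a s * W a k s * (fstar a s * h s) ^ 2)
      = ∫ s in (-s₀)..s₀, (((- B a s * W a 1 s * fstar a s) * (fstar a s * h s ^ 2)
      + B a s * gg a s * (gg a s * h s ^ 2 + fstar a s * (2 * h s * h' s)))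
      + ((k : ℝ) ^ 2 - 1) * (fstar a s ^ 2 * h s ^ 2 / B a s)
      + B a s * fstar a s ^ 2 * h' s ^ 2) := by
    refine intervalIntegral.integral_congr fun s hs => ?_
    rw [Set.uIcc_of_le hle] at hs
    have := B_pos ha s
    beta_reduce
    rw [hder s hs, W_eq ha k s]
    field_simp
    ring
  rw [Sk, hI, intervalIntegral.integral_add (i1.add (i2.const_mul _)) i3,
    intervalIntegral.integral_add i1 (i2.const_mul _), intervalIntegral.integral_const_mul, hP,
    B_neg, gg_neg ha, f_neg ha, ← bdry ha s₀ hs₀ hFBC r hr]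
  ring

end MoriCatenoid
end
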